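/- Let C be a nonempty finite index set, let {R_i}_{i∈C} and R_t be real numbers, and let α ∈ (0,1). Let Q denote the ⌈(1−α)(|C|+1)⌉-th smallest value of the multiset {R_i : i ∈ C ∪ {t}}. Then (i) the upper bound 1{R_t > Q} ≤ α + (1/(|C|+1)) · Σ_{s∈C} ( 1{R_t > Q} − 1{R_s > Q} ) holds; and (ii) if the values {R_i}_{i∈C∪{t}} are pairwise distinct, the lower bound 1{R_t > Q} ≥ α − 1/(|C|+1) + (1/(|C|+1)) · Σ_{s∈C} ( 1{R_t > Q} − 1{R_s > Q} ) also holds. Both inequalities hold deterministically. -/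

import Mathlib

/-!
The sum `∑ s ∈ C, (f t - f s)` equals `(|C| + 1) * f t` minus the sum of `f` over `C ∪ {t}`. So,
for `f` the indicator of exceeding `Q`, both bounds reduce to estimating the fraction of the
`n = |C| + 1` values that exceed `Q`. At most `n - k` values exceed the `k`-th smallest one, with
equality when there are no ties; for `k = ⌈(1 - α) n⌉` that fraction is at most `α`, and in the
absence of ties more than `α - 1 / n`.
-/

open scoped Classical

noncomputable section

/-- The `k`-th smallest element (1-based) of a finite multiset of real numbers
(the `k`-th order statistic). -/
def kth (s : Multiset ℝ) (k : ℕ) : ℝ := (s.sort (· ≤ ·)).getD (k - 1) 0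

section SortedList

variable {α : Type*} [Preorder α] [DecidableLT α] {l : List α}

theorem countP_getElem_lt_eq_countP_drop (hl : l.SortedLE) {i : ℕ} (hi : i < l.length) :
    l.countP (l[i] < ·) = (l.drop (i + 1)).countP (l[i] < ·) := by
  have take_eq_zero : (l.take (i + 1)).countP (l[i] < ·) = 0 := by
    refine List.countP_eq_zero.2 fun a ha ↦ ?_
    obtain ⟨j, hj, rfl⟩ := List.mem_take_iff_getElem.1 ha
    simpa using (hl.getElem_le_getElem_of_le (by omega : j ≤ i)).not_gt
  calc l.countP (l[i] < ·)
      = (l.take (i + 1) ++ l.drop (i + 1)).countP (l[i] < ·) := by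
        simp only [List.take_append_drop]
    _ = (l.drop (i + 1)).countP (l[i] < ·) := by
        rw [List.countP_append, take_eq_zero, zero_add]

theorem countP_getElem_lt_add_le (hl : l.SortedLE) {i : ℕ} (hi : i < l.length) :
    l.countP (l[i] < ·) + (i + 1) ≤ l.length := by
  have count_le : (l.drop (i + 1)).countP (l[i] < ·) ≤ l.length - (i + 1) :=
    List.countP_le_length.trans_eq List.length_drop
  rw [countP_getElem_lt_eq_countP_drop hl hi]
  omega

theorem countP_getElem_lt_add_eq (hl : l.SortedLT) {i : ℕ} (hi : i < l.length) :
    l.countP (l[i] < ·) + (i + 1) = l.length := by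
  have count_eq : (l.drop (i + 1)).countP (l[i] < ·) = l.length - (i + 1) := by
    rw [← List.length_drop, List.countP_eq_length]
    intro a ha
    obtain ⟨j, hj, rfl⟩ := List.mem_drop_iff_getElem.1 ha
    simpa using hl.getElem_lt_getElem_of_lt (by omega : i < i + 1 + j)
  rw [countP_getElem_lt_eq_countP_drop hl.sortedLE hi]
  omega

end SortedList

theorem countP_eq_countP_sort {α : Type*} [LinearOrder α] (s : Multiset α) (p : α → Prop)
    [DecidablePred p] : s.countP p = (s.sort (· ≤ ·)).countP (p ·) := by
  rw [← Multiset.coe_countP, s.sort_eq]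

section OrderStatistic

variable {s : Multiset ℝ} {k : ℕ}

theorem kth_eq_getElem_sort (h : k - 1 < (s.sort (· ≤ ·)).length) :
    kth s k = (s.sort (· ≤ ·))[k - 1] :=
  List.getD_eq_getElem _ _ h

theorem countP_kth_lt_add_le (hk : 1 ≤ k) (hks : k ≤ s.card) :
    s.countP (kth s k < ·) + k ≤ s.card := by
  have hi : k - 1 < (s.sort (· ≤ ·)).length := by rw [Multiset.length_sort]; omega
  have sorted : (s.sort (· ≤ ·)).SortedLE := (s.pairwise_sort _).sortedLE
  simpa [countP_eq_countP_sort, kth_eq_getElem_sort hi, hk] using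
    countP_getElem_lt_add_le sorted hi

theorem countP_kth_lt_add_eq (hs : s.Nodup) (hk : 1 ≤ k) (hks : k ≤ s.card) :
    s.countP (kth s k < ·) + k = s.card := by
  have hi : k - 1 < (s.sort (· ≤ ·)).length := by rw [Multiset.length_sort]; omega
  have nodup : (s.sort (· ≤ ·)).Nodup := by rwa [← Multiset.coe_nodup, s.sort_eq]
  have sorted : (s.sort (· ≤ ·)).SortedLT :=
    (s.pairwise_sort _).sortedLE.sortedLT_of_nodup nodup
  simpa [countP_eq_countP_sort, kth_eq_getElem_sort hi, hk] using
    countP_getElem_lt_add_eq sorted hi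

end OrderStatistic

section Ceil

variable {K : Type*} [Ring K] [LinearOrder K] [IsStrictOrderedRing K] [FloorSemiring K] {a : K}

theorem one_le_ceil_one_sub_mul (ha : a < 1) {n : ℕ} (hn : 0 < n) : 1 ≤ ⌈(1 - a) * n⌉₊ :=
  Nat.ceil_pos.2 <| mul_pos (sub_pos.2 ha) (Nat.cast_pos.2 hn)

theorem ceil_one_sub_mul_le (ha : 0 ≤ a) (n : ℕ) : ⌈(1 - a) * n⌉₊ ≤ n :=
  Nat.ceil_le.2 <| mul_le_of_le_one_left n.cast_nonneg (sub_le_self 1 ha)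

end Ceil

section ConformalQuantile

/-- The split-conformal quantile of the scores `s` at miscoverage level `α`: the
`⌈(1 - α) |s|⌉`-th smallest score. Here `s` already contains the test score, so that `|s|` is the
number `|C| + 1` of calibration scores plus one. -/
def conformalQuantile (α : ℝ) (s : Multiset ℝ) : ℝ := kth s ⌈(1 - α) * s.card⌉₊

variable {α : ℝ} {s : Multiset ℝ}

theorem countP_conformalQuantile_lt_div_card_le (hα₀ : 0 ≤ α) (hα₁ : α < 1) (hs : s ≠ 0) :
    (s.countP (conformalQuantile α s < ·) : ℝ) / s.card ≤ α := by
  have card_pos : (0 : ℝ) < s.card := Nat.cast_pos.2 (Multiset.card_pos.2 hs)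
  have count_add_le : (s.countP (conformalQuantile α s < ·) : ℝ) + ⌈(1 - α) * s.card⌉₊ ≤ s.card :=
    mod_cast countP_kth_lt_add_le (one_le_ceil_one_sub_mul hα₁ (Multiset.card_pos.2 hs))
      (ceil_one_sub_mul_le hα₀ s.card)
  have le_ceil : (1 - α) * s.card ≤ ⌈(1 - α) * s.card⌉₊ := Nat.le_ceil _
  rw [div_le_iff₀ card_pos]
  linarith

theorem lt_countP_conformalQuantile_lt_div_card (hα₀ : 0 ≤ α) (hα₁ : α < 1) (hs : s ≠ 0)
    (hnodup : s.Nodup) :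
    α - 1 / s.card < (s.countP (conformalQuantile α s < ·) : ℝ) / s.card := by
  have card_pos : (0 : ℝ) < s.card := Nat.cast_pos.2 (Multiset.card_pos.2 hs)
  have count_add_eq : (s.countP (conformalQuantile α s < ·) : ℝ) + ⌈(1 - α) * s.card⌉₊ = s.card :=
    mod_cast countP_kth_lt_add_eq hnodup (one_le_ceil_one_sub_mul hα₁ (Multiset.card_pos.2 hs))
      (ceil_one_sub_mul_le hα₀ s.card)
  have ceil_lt : (⌈(1 - α) * s.card⌉₊ : ℝ) < (1 - α) * s.card + 1 :=
    Nat.ceil_lt_add_one (mul_nonneg (sub_nonneg.2 hα₁.le) card_pos.le)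
  rw [sub_lt_iff_lt_add, ← add_div, lt_div_iff₀ card_pos]
  linarith

end ConformalQuantile

theorem sum_insert_div_add_sum_sub_eq {ι K : Type*} [DecidableEq ι] [Field K]
    [CharZero K] {C : Finset ι} {t : ι} (ht : t ∉ C) (f : ι → K) :
    (∑ s ∈ insert t C, f s) / (C.card + 1) + 1 / (C.card + 1) * ∑ s ∈ C, (f t - f s) = f t := by
  have card_ne_zero : (C.card : K) + 1 ≠ 0 := C.card.cast_add_one_ne_zero
  rw [Finset.sum_insert ht, Finset.sum_sub_distrib, Finset.sum_const, nsmul_eq_mul]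
  field_simp
  ring

theorem sum_ite_eq_countP_map {ι β K : Type*} [AddCommMonoidWithOne K] (S : Finset ι) (f : ι → β)
    (p : β → Prop) [DecidablePred p] :
    ∑ i ∈ S, (if p (f i) then (1 : K) else 0) = (S.val.map f).countP p := by
  rw [Finset.sum_boole, Multiset.countP_map]
  rfl

/-- **Deterministic miscoverage-indicator bounds.**
Let `C` be a nonempty finite index set, `t ∉ C`, `{R i}` reals and `α ∈ (0,1)`.  Let `Q` be the
`⌈(1-α)(|C|+1)⌉`-th smallest value of `{R i : i ∈ C ∪ {t}}`.  Then
(i) `1{R t > Q} ≤ α + (1/(|C|+1)) ∑_{s ∈ C} (1{R t > Q} - 1{R s > Q})`, and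
(ii) if the values `{R i}_{i ∈ C ∪ {t}}` are pairwise distinct,
`1{R t > Q} ≥ α - 1/(|C|+1) + (1/(|C|+1)) ∑_{s ∈ C} (1{R t > Q} - 1{R s > Q})`.
Both inequalities hold deterministically. -/
theorem miscoverage_indicator_bounds {ι : Type*} (C : Finset ι) (hC : C.Nonempty)
    (t : ι) (ht : t ∉ C) (R : ι → ℝ) (α : ℝ) (hα0 : 0 < α) (hα1 : α < 1) :
    (let Q : ℝ := kth (Multiset.map R (insert t C).val) ⌈(1 - α) * ((C.card : ℝ) + 1)⌉₊
    ((if Q < R t then (1 : ℝ) else 0) ≤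
        α + (1 / ((C.card : ℝ) + 1)) *
          ∑ s ∈ C, ((if Q < R t then (1 : ℝ) else 0) - (if Q < R s then (1 : ℝ) else 0)))
    ∧ (Set.InjOn R (↑(insert t C) : Set ι) →
        α - 1 / ((C.card : ℝ) + 1) + (1 / ((C.card : ℝ) + 1)) *
            ∑ s ∈ C, ((if Q < R t then (1 : ℝ) else 0) - (if Q < R s then (1 : ℝ) else 0))
          ≤ (if Q < R t then (1 : ℝ) else 0))) := by
  intro Q
  set scores : Multiset ℝ := (insert t C).val.map R
  have scores_ne_zero : scores ≠ 0 := by simp [scores, -Finset.insert_val]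
  have card_scores : (scores.card : ℝ) = C.card + 1 := by
    rw [Multiset.card_map, Finset.card_val, Finset.card_insert_of_notMem ht, Nat.cast_add_one]
  have hQ : Q = conformalQuantile α scores := by rw [conformalQuantile, card_scores]
  have decomposition := sum_insert_div_add_sum_sub_eq ht
    fun s ↦ if Q < R s then (1 : ℝ) else 0
  rw [sum_ite_eq_countP_map (insert t C) R (Q < ·), ← card_scores] at decomposition
  rw [← card_scores]
  refine ⟨?_, fun hR ↦ ?_⟩
  · have fraction_le : (scores.countP (Q < ·) : ℝ) / scores.card ≤ α :=
      hQ ▸ countP_conformalQuantile_lt_div_card_le hα0.le hα1 scores_ne_zero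
    linarith
  · have scores_nodup : scores.Nodup := Multiset.Nodup.map_on hR (insert t C).nodup
    have lt_fraction : α - 1 / scores.card < (scores.countP (Q < ·) : ℝ) / scores.card :=
      hQ ▸ lt_countP_conformalQuantile_lt_div_card hα0.le hα1 scores_ne_zero scores_nodup
    linarith

end
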